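/- For every u ∈ ℂ, Pf(Φ̃(u)) = Σ_{k=0}^{⌊n/2⌋} (−i/2)^{n−2k} H_{n−2k}(i u) · Γ_k in End(P), where i = √−1 and H_m denotes the (physicists') Hermite polynomial of degree m, given explicitly by H_m(x) = m! Σ_{j=0}^{⌊m/2⌋} ( (−1)^j 2^{m−2j} / (j! (m−2j)!) ) x^{m−2j}. -/

import Mathlib

open Matrix MvPolynomial

noncomputable section

/-- Index set for entries `x_{i,j}` with `i < j`. -/
abbrev Idx (n : ℕ) := {p : Fin n × Fin n // p.1 < p.2}

/-- Polynomial algebra on the space of alternating `n × n` matrices. -/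
abbrev P (n : ℕ) := MvPolynomial (Idx n) ℂ

/-- Multiplication operator `M_{i,j}` (with `M_{j,i} = -M_{i,j}`, `M_{i,i} = 0`). -/
def Mop (n : ℕ) (i j : Fin n) : Module.End ℂ (P n) :=
  if h : i < j then LinearMap.mulLeft ℂ (X ⟨(i, j), h⟩)
  else if h' : j < i then -LinearMap.mulLeft ℂ (X ⟨(j, i), h'⟩ : P n)
  else 0

/-- Derivation `D_{i,j} = ∂/∂x_{i,j}` (with `D_{j,i} = -D_{i,j}`, `D_{i,i} = 0`). -/
def Dop (n : ℕ) (i j : Fin n) : Module.End ℂ (P n) :=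
  if h : i < j then ((pderiv ⟨(i, j), h⟩ : Derivation ℂ (P n) (P n)) : P n →ₗ[ℂ] P n)
  else if h' : j < i then -((pderiv ⟨(j, i), h'⟩ : Derivation ℂ (P n) (P n)) : P n →ₗ[ℂ] P n)
  else 0

/-- The generic alternating matrix with entries in `P n`. -/
def genMat (n : ℕ) : Matrix (Fin n) (Fin n) (P n) := Matrix.of fun i j =>
  if h : i < j then X ⟨(i, j), h⟩
  else if h' : j < i then -X ⟨(j, i), h'⟩
  else 0

/-- The representation `π(g)` of `GL n ℂ` on `P n`, sending `x_{i,j}` to the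
`(i,j)`-entry of `g⁻¹ x ᵗ(g⁻¹)`. -/
def piHom (n : ℕ) (g : GL (Fin n) ℂ) : P n →ₐ[ℂ] P n :=
  aeval fun v : Idx n =>
    ((((g⁻¹ : GL (Fin n) ℂ) : Matrix (Fin n) (Fin n) ℂ).map (algebraMap ℂ (P n)) * genMat n *
      (((g⁻¹ : GL (Fin n) ℂ) : Matrix (Fin n) (Fin n) ℂ).map (algebraMap ℂ (P n)))ᵀ))
      v.1.1 v.1.2

/-- Pfaffian of a `2m × 2m` matrix with (possibly noncommuting) entries in a `ℂ`-algebra. -/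
def Pf {A : Type*} [Ring A] [Algebra ℂ A] {m : ℕ} (B : Matrix (Fin (2 * m)) (Fin (2 * m)) A) :
    A :=
  (((2 : ℂ) ^ m * m.factorial)⁻¹) • ∑ σ : Equiv.Perm (Fin (2 * m)),
    (Equiv.Perm.sign σ : ℤ) •
      (List.ofFn (fun i : Fin m =>
        B (σ ⟨2 * (i : ℕ), by have := i.isLt; omega⟩)
          (σ ⟨2 * (i : ℕ) + 1, by have := i.isLt; omega⟩))).prod

/-- The matrix `J_n` with 1's on the anti-diagonal. -/
def Jmat (A : Type*) [Zero A] [One A] (n : ℕ) : Matrix (Fin n) (Fin n) A :=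
  Matrix.of fun i j => if (i : ℕ) + (j : ℕ) = n - 1 then 1 else 0

/-- Reindexing `Fin n ⊕ Fin n ≃ Fin (2*n)`. -/
def sumEquiv (n : ℕ) : (Fin n ⊕ Fin n) ≃ Fin (2 * n) :=
  finSumFinEquiv.trans (finCongr (two_mul n).symm)

/-- The alternating matrix `Φ̃(u) = [[M, u·J_n], [−u·J_n, −J_n D J_n]]` over `End(P)`. -/
def PhiTilde (n : ℕ) (u : ℂ) : Matrix (Fin (2 * n)) (Fin (2 * n)) (Module.End ℂ (P n)) :=
  Matrix.reindex (sumEquiv n) (sumEquiv n)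
    (Matrix.fromBlocks (Matrix.of fun i j => Mop n i j) (u • Jmat (Module.End ℂ (P n)) n)
      (-(u • Jmat (Module.End ℂ (P n)) n))
      (-(Jmat (Module.End ℂ (P n)) n * (Matrix.of fun i j => Dop n i j) *
          Jmat (Module.End ℂ (P n)) n)))


/-- `Γ_k = Σ_{|I|=2k} Pf(x_I) Pf(∂_I)`. -/
def Gamma (n k : ℕ) : Module.End ℂ (P n) :=
  ∑ I : {I : Finset (Fin n) // I.card = 2 * k},
    Pf (Matrix.of fun a b : Fin (2 * k) =>
        Mop n (I.1.orderIsoOfFin I.2 a) (I.1.orderIsoOfFin I.2 b)) *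
      Pf (Matrix.of fun a b : Fin (2 * k) =>
        Dop n (I.1.orderIsoOfFin I.2 a) (I.1.orderIsoOfFin I.2 b))

/-- The physicists' Hermite polynomial
`H_m(x) = m! Σ_{j=0}^{⌊m/2⌋} ((−1)^j 2^{m−2j} / (j! (m−2j)!)) x^{m−2j}`. -/
def Hermite (m : ℕ) (x : ℂ) : ℂ :=
  (m.factorial : ℂ) *
    ∑ j ∈ Finset.range (m / 2 + 1),
      (((-1 : ℂ)) ^ j * (2 : ℂ) ^ (m - 2 * j) /
          ((j.factorial : ℂ) * ((m - 2 * j).factorial : ℂ))) *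
        x ^ (m - 2 * j)

/-!
For an alternating matrix `B` of size `2n`, the top coefficient (Berezin integral) of the divided
power `ω ^ n / n!` of the 2-form `ω = ∑ᵢⱼ Bᵢⱼ xᵢ ∧ xⱼ` is `2 ^ n Pf B`. In the basis
`e₁, …, eₙ, fₙ, …, f₁` the 2-form of `Φ̃(u)` is `a + b + 2 u t`, where `a` and `b` are the 2-forms
of `M` in the `eᵢ` and of `-D` in the `fᵢ`, and `t = ∑ᵢ eᵢ ∧ fᵢ` is central. The canonical
commutation relations amount to `b a = a b + 2 t ^ 2`, so moving every `a` to the left of every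
`b` gives `exp (s (a + b + 2 u t)) = exp (s a) exp (s b) exp (2 u s t + s ^ 2 t ^ 2)`, and the
last factor generates the Hermite polynomials on the imaginary axis. Integrating
`a ^ p b ^ q t ^ r` leaves only `p = q`, where each letter `eᵢ` occurs with its partner `fᵢ`, and
produces a multiple of `Γ_p`.
-/

open Finset.HasAntidiagonal (antidiagonal mem_antidiagonal)

theorem succ_smul_sum_antidiagonal_succ {K V : Type*} [Semiring K] [AddCommMonoid V] [Module K V]
    (f : ℕ × ℕ → V) (n : ℕ) :
    ((n : K) + 1) • ∑ p ∈ antidiagonal (n + 1), f p =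
      (∑ p ∈ antidiagonal n, ((p.1 : K) + 1) • f (p.1 + 1, p.2)) +
        ∑ p ∈ antidiagonal n, ((p.2 : K) + 1) • f (p.1, p.2 + 1) := by
  have weights : ((n : K) + 1) • ∑ p ∈ antidiagonal (n + 1), f p =
      (∑ p ∈ antidiagonal (n + 1), (p.1 : K) • f p) +
        ∑ p ∈ antidiagonal (n + 1), (p.2 : K) • f p := by
    rw [Finset.smul_sum, ← Finset.sum_add_distrib]
    refine Finset.sum_congr rfl fun p hp => ?_
    rw [← add_smul, ← Nat.cast_add, mem_antidiagonal.mp hp, Nat.cast_succ]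
  rw [weights, Finset.Nat.sum_antidiagonal_succ, Finset.Nat.sum_antidiagonal_succ']
  simp only [Nat.cast_zero, zero_smul, zero_add, Nat.cast_succ]

section NormalOrdering

variable {K R : Type*} [Field K] [Ring R] [Algebra K R] {a b t : R} {c d : K}

/-- The divided power `x ^ k / k!`. -/
def divPow (K : Type*) {R : Type*} [Field K] [Ring R] [Algebra K R] (x : R) (k : ℕ) : R :=
  (k.factorial : K)⁻¹ • x ^ k

variable (K) in
theorem divPow_zero (x : R) : divPow K x 0 = 1 := by simp [divPow]

variable (K) in
theorem mul_divPow [CharZero K] (x : R) (k : ℕ) :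
    x * divPow K x k = ((k : K) + 1) • divPow K x (k + 1) := by
  have hk : (k : K) + 1 ≠ 0 := k.cast_add_one_ne_zero
  rw [divPow, divPow, mul_smul_comm, ← pow_succ', smul_smul, Nat.factorial_succ, Nat.cast_mul,
    Nat.cast_succ, mul_inv, mul_inv_cancel_left₀ hk]

variable (K) in
theorem commute_divPow_right (h : Commute a b) (k : ℕ) : Commute a (divPow K b k) :=
  (h.pow_right k).smul_right _

theorem mul_divPow_succ_of_commutator [CharZero K] (hba : b * a = a * b + d • t)
    (hta : Commute t a) (k : ℕ) :
    b * divPow K a (k + 1) = divPow K a (k + 1) * b + d • (divPow K a k * t) := by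
  induction k with
  | zero => simp [divPow, hba]
  | succ k ih =>
    have hk : ((k + 1 : ℕ) : K) + 1 ≠ 0 := (k + 1).cast_add_one_ne_zero
    apply smul_right_injective R hk
    calc
      (((k + 1 : ℕ) : K) + 1) • (b * divPow K a (k + 2))
        = b * a * divPow K a (k + 1) := by rw [← mul_smul_comm, ← mul_divPow, mul_assoc]
      _ = a * (b * divPow K a (k + 1)) + d • (t * divPow K a (k + 1)) := by
          rw [hba, add_mul, mul_assoc, smul_mul_assoc]
      _ = a * divPow K a (k + 1) * b + d • (a * divPow K a k * t + divPow K a (k + 1) * t) := by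
          rw [ih, (commute_divPow_right K hta _).eq, mul_add, mul_smul_comm, add_assoc, ← smul_add,
            mul_assoc, mul_assoc]
      _ = (((k + 1 : ℕ) : K) + 1) • (divPow K a (k + 2) * b + d • (divPow K a (k + 1) * t)) := by
          rw [mul_divPow, mul_divPow]
          simp only [smul_add, smul_mul_assoc, ← add_smul, smul_smul, Nat.cast_succ]
          module

/-- The normally ordered divided power of `a + b`: the expansion of `(a + b) ^ m / m!` with every
`a` moved to the left of every `b`, as if `a` and `b` commuted. -/
def normalOrderedDivPow (K : Type*) {R : Type*} [Field K] [Ring R] [Algebra K R] (a b : R)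
    (m : ℕ) : R :=
  ∑ p ∈ antidiagonal m, divPow K a p.1 * divPow K b p.2

theorem commute_normalOrderedDivPow (hta : Commute t a) (htb : Commute t b) (m : ℕ) :
    Commute t (normalOrderedDivPow K a b m) :=
  Commute.sum_right _ _ _ fun _ _ =>
    (commute_divPow_right K hta _).mul_right (commute_divPow_right K htb _)

theorem smul_normalOrderedDivPow_succ [CharZero K] (m : ℕ) :
    ((m : K) + 1) • normalOrderedDivPow K a b (m + 1) =
      a * normalOrderedDivPow K a b m +
        ∑ p ∈ antidiagonal m, divPow K a p.1 * (b * divPow K b p.2) := by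
  simp only [normalOrderedDivPow, succ_smul_sum_antidiagonal_succ, mul_divPow, Finset.mul_sum,
    ← mul_assoc, smul_mul_assoc, mul_smul_comm]

theorem add_mul_normalOrderedDivPow_zero :
    (a + b) * normalOrderedDivPow K a b 0 = normalOrderedDivPow K a b 1 := by
  simp [normalOrderedDivPow, divPow, Finset.Nat.antidiagonal_succ, add_comm]

theorem add_mul_normalOrderedDivPow_succ [CharZero K] (hba : b * a = a * b + d • t)
    (hta : Commute t a) (htb : Commute t b) (m : ℕ) :
    (a + b) * normalOrderedDivPow K a b (m + 1) =
      ((m : K) + 2) • normalOrderedDivPow K a b (m + 2) +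
        d • (normalOrderedDivPow K a b m * t) := by
  have moved : ∀ p : ℕ × ℕ, b * (divPow K a (p.1 + 1) * divPow K b p.2) =
      divPow K a (p.1 + 1) * (b * divPow K b p.2) + d • (divPow K a p.1 * divPow K b p.2 * t) := by
    intro p
    rw [← mul_assoc, mul_divPow_succ_of_commutator hba hta, add_mul, smul_mul_assoc,
      mul_assoc, mul_assoc _ t, (commute_divPow_right K htb _).eq, mul_assoc _ _ t]
  have b_part : b * normalOrderedDivPow K a b (m + 1) =
      (∑ p ∈ antidiagonal (m + 1), divPow K a p.1 * (b * divPow K b p.2)) +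
        d • (normalOrderedDivPow K a b m * t) := by
    simp only [normalOrderedDivPow, Finset.Nat.sum_antidiagonal_succ, mul_add, Finset.mul_sum,
      Finset.sum_mul, Finset.smul_sum, moved, Finset.sum_add_distrib, divPow_zero, one_mul,
      add_assoc]
  have a_and_b_parts := smul_normalOrderedDivPow_succ (K := K) (a := a) (b := b) (m + 1)
  rw [Nat.cast_succ, add_assoc, one_add_one_eq_two] at a_and_b_parts
  rw [add_mul, b_part, a_and_b_parts, add_assoc]

theorem sum_smul_commutator_normalOrderedDivPow [CharZero K]
    (hba : b * a = a * b + d • t ^ 2) (hta : Commute t a) (htb : Commute t b) {h : ℕ → K}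
    (h_one : h 1 = c * h 0)
    (h_rec : ∀ r : ℕ, ((r : K) + 2) * h (r + 2) = c * h (r + 1) + d * h r) (n : ℕ) :
    ∑ p ∈ antidiagonal n, h p.1 • (((a + b) * normalOrderedDivPow K a b p.2 -
        ((p.2 : K) + 1) • normalOrderedDivPow K a b (p.2 + 1)) * t ^ p.1) =
      ∑ p ∈ antidiagonal n, (((p.1 : K) + 1) * h (p.1 + 1) - c * h p.1) •
        (normalOrderedDivPow K a b p.2 * t ^ (p.1 + 1)) := by
  cases n with
  | zero => simp [add_mul_normalOrderedDivPow_zero, h_one]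
  | succ n =>
    rw [Finset.Nat.sum_antidiagonal_succ', Finset.Nat.sum_antidiagonal_succ]
    have head_eq_zero : (((0 : ℕ) : K) + 1) * h (0 + 1) - c * h 0 = 0 := by simp [h_one]
    have last_eq_zero : (a + b) * normalOrderedDivPow K a b 0 -
        (((0 : ℕ) : K) + 1) • normalOrderedDivPow K a b (0 + 1) = 0 := by
      simp [add_mul_normalOrderedDivPow_zero]
    simp only [head_eq_zero, last_eq_zero, zero_mul, smul_zero, zero_smul, zero_add]
    refine Finset.sum_congr rfl fun p _ => ?_
    have cast_succ_add_one : ∀ m : ℕ, ((m + 1 : ℕ) : K) + 1 = m + 2 := fun m => by push_cast; ring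
    rw [add_mul_normalOrderedDivPow_succ hba (hta.pow_left 2) (htb.pow_left 2), cast_succ_add_one,
      cast_succ_add_one, h_rec, add_sub_cancel_left, add_sub_cancel_left, smul_mul_assoc, mul_assoc,
      ← pow_add, smul_smul, mul_comm d, add_comm 2]

theorem add_add_smul_mul_sum_normalOrderedDivPow [CharZero K]
    (hba : b * a = a * b + d • t ^ 2) (hta : Commute t a) (htb : Commute t b) {h : ℕ → K}
    (h_one : h 1 = c * h 0)
    (h_rec : ∀ r : ℕ, ((r : K) + 2) * h (r + 2) = c * h (r + 1) + d * h r) (n : ℕ) :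
    (a + b + c • t) * ∑ p ∈ antidiagonal n, h p.1 • (normalOrderedDivPow K a b p.2 * t ^ p.1) =
      ((n : K) + 1) •
        ∑ p ∈ antidiagonal (n + 1), h p.1 • (normalOrderedDivPow K a b p.2 * t ^ p.1) := by
  have commutators := sum_smul_commutator_normalOrderedDivPow hba hta htb h_one h_rec n
  simp only [sub_mul, smul_sub, sub_smul, Finset.sum_sub_distrib, sub_eq_iff_eq_add] at commutators
  have t_mul : ∀ p : ℕ × ℕ, t * (normalOrderedDivPow K a b p.2 * t ^ p.1) =
      normalOrderedDivPow K a b p.2 * t ^ (p.1 + 1) := fun p => by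
    rw [← mul_assoc, (commute_normalOrderedDivPow hta htb _).eq, mul_assoc, pow_succ']
  rw [succ_smul_sum_antidiagonal_succ, add_mul, Finset.mul_sum, Finset.mul_sum]
  simp only [mul_smul_comm, smul_mul_assoc, t_mul]
  simp only [← mul_assoc, commutators, smul_mul_assoc, smul_smul, mul_comm (h _)]
  abel

-- The scalars `h r` are the coefficients of the power series `exp (c s + d s ^ 2 / 2)`.
theorem divPow_add_add_smul [CharZero K] (hba : b * a = a * b + d • t ^ 2)
    (hta : Commute t a) (htb : Commute t b) {h : ℕ → K} (h_zero : h 0 = 1) (h_one : h 1 = c)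
    (h_rec : ∀ r : ℕ, ((r : K) + 2) * h (r + 2) = c * h (r + 1) + d * h r) (n : ℕ) :
    divPow K (a + b + c • t) n =
      ∑ p ∈ antidiagonal n, h p.1 • (normalOrderedDivPow K a b p.2 * t ^ p.1) := by
  induction n with
  | zero => simp [normalOrderedDivPow, divPow, h_zero]
  | succ n ih =>
    refine smul_right_injective R (n.cast_add_one_ne_zero : (n : K) + 1 ≠ 0) ?_
    have h_one' : h 1 = c * h 0 := by rw [h_one, h_zero, mul_one]
    simp only [← mul_divPow, ih, add_add_smul_mul_sum_normalOrderedDivPow hba hta htb h_one' h_rec]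

end NormalOrdering

section HermiteRecurrence

/-- The `j`-th summand of `Hermite m x / m!`, extended by zero beyond `j = m / 2`. -/
def hermiteTerm (x : ℂ) (m j : ℕ) : ℂ :=
  if 2 * j ≤ m then (-1) ^ j * (2 * x) ^ (m - 2 * j) / (j.factorial * (m - 2 * j).factorial) else 0

theorem Hermite_eq_factorial_mul_sum_hermiteTerm (x : ℂ) {m N : ℕ} (hN : m / 2 < N) :
    Hermite m x = m.factorial * ∑ j ∈ Finset.range N, hermiteTerm x m j := by
  have range_subset : Finset.range (m / 2 + 1) ⊆ Finset.range N := Finset.range_mono hN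
  have tail_eq_zero : ∀ j ∈ Finset.range N, j ∉ Finset.range (m / 2 + 1) →
      hermiteTerm x m j = 0 := fun j _ hj => if_neg (by rw [Finset.mem_range] at hj; lia)
  rw [Hermite, ← Finset.sum_subset range_subset tail_eq_zero]
  congr 1
  refine Finset.sum_congr rfl fun j hj => ?_
  rw [Finset.mem_range] at hj
  rw [hermiteTerm, if_pos (by lia), mul_pow]
  ring

theorem sub_mul_hermiteTerm_succ (x : ℂ) (m j : ℕ) :
    ((m + 1 : ℂ) - 2 * j) * hermiteTerm x (m + 1) j = 2 * x * hermiteTerm x m j := by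
  rcases lt_trichotomy (2 * j) (m + 1) with h | h | h
  · obtain ⟨l, rfl⟩ := Nat.exists_eq_add_of_le (Nat.lt_succ_iff.mp h)
    have hl : (l : ℂ) + 1 ≠ 0 := l.cast_add_one_ne_zero
    rw [hermiteTerm, hermiteTerm, if_pos (by lia), if_pos (by lia), add_assoc,
      Nat.add_sub_cancel_left, Nat.add_sub_cancel_left, Nat.factorial_succ, pow_succ]
    push_cast
    field_simp
    ring
  · rw [hermiteTerm, hermiteTerm, if_neg (by lia : ¬2 * j ≤ m)]
    have : (2 * j : ℂ) = m + 1 := mod_cast h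
    simp [this]
  · rw [hermiteTerm, hermiteTerm, if_neg (by lia), if_neg (by lia), mul_zero, mul_zero]

theorem succ_mul_hermiteTerm_succ (x : ℂ) (m j : ℕ) :
    (j + 1 : ℂ) * hermiteTerm x (m + 2) (j + 1) = -hermiteTerm x m j := by
  by_cases h : 2 * j ≤ m
  · have hj : (j : ℂ) + 1 ≠ 0 := j.cast_add_one_ne_zero
    rw [hermiteTerm, hermiteTerm, if_pos (by lia), if_pos h, mul_add_one, Nat.add_sub_add_right,
      Nat.factorial_succ, pow_succ]
    push_cast
    field_simp
  · rw [hermiteTerm, hermiteTerm, if_neg (by lia), if_neg h, mul_zero, neg_zero]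

theorem Hermite_zero (x : ℂ) : Hermite 0 x = 1 := by simp [Hermite]

theorem Hermite_one (x : ℂ) : Hermite 1 x = 2 * x := by simp [Hermite]

theorem Hermite_add_two (m : ℕ) (x : ℂ) :
    Hermite (m + 2) x = 2 * x * Hermite (m + 1) x - 2 * (m + 1) * Hermite m x := by
  have term : ∀ j : ℕ, (m + 2 : ℂ) * hermiteTerm x (m + 2) j =
      2 * x * hermiteTerm x (m + 1) j + 2 * (j * hermiteTerm x (m + 2) j) := fun j => by
    rw [← sub_mul_hermiteTerm_succ]
    push_cast
    ring
  have shifted : ∑ j ∈ Finset.range (m + 3), (j : ℂ) * hermiteTerm x (m + 2) j =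
      -∑ j ∈ Finset.range (m + 2), hermiteTerm x m j := by
    rw [Finset.sum_range_succ', Nat.cast_zero, zero_mul, add_zero, ← Finset.sum_neg_distrib]
    exact Finset.sum_congr rfl fun j _ => mod_cast succ_mul_hermiteTerm_succ x m j
  rw [Hermite_eq_factorial_mul_sum_hermiteTerm x (m := m + 2) (N := m + 3) (by lia),
    Hermite_eq_factorial_mul_sum_hermiteTerm x (m := m + 1) (N := m + 3) (by lia),
    Hermite_eq_factorial_mul_sum_hermiteTerm x (m := m) (N := m + 2) (by lia),
    Nat.factorial_succ, Nat.factorial_succ]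
  have sums : (m + 2 : ℂ) * ∑ j ∈ Finset.range (m + 3), hermiteTerm x (m + 2) j =
      2 * x * ∑ j ∈ Finset.range (m + 3), hermiteTerm x (m + 1) j -
        2 * ∑ j ∈ Finset.range (m + 2), hermiteTerm x m j := by
    rw [Finset.mul_sum, Finset.sum_congr rfl fun j _ => term j, Finset.sum_add_distrib,
      ← Finset.mul_sum, ← Finset.mul_sum, shifted, mul_neg, sub_eq_add_neg]
  push_cast
  linear_combination ((m : ℂ) + 1) * m.factorial * sums

/-- The coefficient of `s ^ r` in `exp (2 u s + s ^ 2)`: Hermite polynomials on the imaginary axis,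
normalised so that all signs disappear. -/
def imaginaryHermiteCoeff (u : ℂ) (r : ℕ) : ℂ :=
  (-Complex.I) ^ r * Hermite r (Complex.I * u) / r.factorial

theorem imaginaryHermiteCoeff_zero (u : ℂ) : imaginaryHermiteCoeff u 0 = 1 := by
  simp [imaginaryHermiteCoeff, Hermite_zero]

theorem imaginaryHermiteCoeff_one (u : ℂ) : imaginaryHermiteCoeff u 1 = 2 * u := by
  rw [imaginaryHermiteCoeff, Hermite_one, pow_one, Nat.factorial_one, Nat.cast_one, div_one]
  linear_combination -2 * u * Complex.I_mul_I

theorem imaginaryHermiteCoeff_add_two (u : ℂ) (r : ℕ) :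
    ((r : ℂ) + 2) * imaginaryHermiteCoeff u (r + 2) =
      2 * u * imaginaryHermiteCoeff u (r + 1) + 2 * imaginaryHermiteCoeff u r := by
  have h_one : (r : ℂ) + 1 ≠ 0 := r.cast_add_one_ne_zero
  have h_two : (r : ℂ) + 1 + 1 ≠ 0 := mod_cast (r + 1).succ_ne_zero
  have h_fac : (r.factorial : ℂ) ≠ 0 := Nat.cast_ne_zero.mpr r.factorial_ne_zero
  simp only [imaginaryHermiteCoeff, Hermite_add_two, Nat.factorial_succ, Nat.cast_mul,
    Nat.cast_succ, pow_succ]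
  field_simp
  linear_combination ((r + 2) * Complex.I * u * Hermite (r + 1) (Complex.I * u) -
    (r + 1) * (r + 2) * Hermite r (Complex.I * u)) * Complex.I_mul_I

end HermiteRecurrence

section PfaffianPowers

open ExteriorAlgebra (ι ιMulti)
open scoped TensorProduct

theorem sum_eq_sum_orderEmbOfFin_comp_perm {κ M : Type*} [Fintype κ] [LinearOrder κ]
    [AddCommMonoid M] {r : ℕ} (F : (Fin r → κ) → M)
    (hF : ∀ v, ¬ Function.Injective v → F v = 0) :
    ∑ v, F v = ∑ I : {I : Finset κ // I.card = r}, ∑ σ : Equiv.Perm (Fin r),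
      F (I.1.orderEmbOfFin I.2 ∘ σ) := by
  rw [← Fintype.sum_prod_type']
  symm
  refine Finset.sum_of_injOn
    (fun p : {I : Finset κ // I.card = r} × Equiv.Perm (Fin r) => p.1.1.orderEmbOfFin p.1.2 ∘ p.2)
    ?_ (fun _ _ => Finset.mem_coe.mpr (Finset.mem_univ _)) (fun v _ hv => hF v fun v_inj => hv ?_)
    fun _ _ => rfl
  · rintro ⟨⟨I, hI⟩, σ⟩ - ⟨⟨J, hJ⟩, τ⟩ - h
    replace h : I.orderEmbOfFin hI ∘ σ = J.orderEmbOfFin hJ ∘ τ := h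
    have ranges := congrArg Set.range h
    rw [EquivLike.range_comp, EquivLike.range_comp, Finset.range_orderEmbOfFin,
      Finset.range_orderEmbOfFin, Finset.coe_inj] at ranges
    subst ranges
    congr
    exact DFunLike.coe_injective ((I.orderEmbOfFin hI).injective.comp_left h)
  · have card_image : (Finset.univ.image v).card = r := by
      rw [Finset.card_image_of_injective _ v_inj, Finset.card_fin]
    have sorted_strictMono : StrictMono (v ∘ Tuple.sort v) :=
      (Tuple.monotone_sort v).strictMono_of_injective (v_inj.comp (Tuple.sort v).injective)
    have sorted_eq := Finset.orderEmbOfFin_unique card_image (fun _ => by simp) sorted_strictMono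
    refine ⟨(⟨Finset.univ.image v, card_image⟩, (Tuple.sort v)⁻¹), by simp, ?_⟩
    funext a
    simp [← sorted_eq]

theorem sum_pow_eq_sum_list_prod {X R : Type*} [Fintype X] [Semiring R] (f : X → R) (m : ℕ) :
    (∑ x, f x) ^ m = ∑ u : Fin m → X, (List.ofFn (f ∘ u)).prod := by
  have expand := (MultilinearMap.mkPiAlgebraFin ℕ m R).map_sum fun _ : Fin m => f
  rwa [MultilinearMap.mkPiAlgebraFin_apply_const] at expand

theorem tmul_list_prod {K R S X : Type*} [CommRing K] [Ring R] [Algebra K R] [Ring S]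
    [Algebra K S] (f : X → R) (g : X → S) (l : List X) :
    (l.map fun x => f x ⊗ₜ[K] g x).prod = (l.map f).prod ⊗ₜ (l.map g).prod := by
  induction l with
  | nil => rfl
  | cons x l ih =>
    simp only [List.map_cons, List.prod_cons, ih, Algebra.TensorProduct.tmul_mul_tmul]

/-- A word of even length as the list of its consecutive pairs of letters. -/
def wordPairs (X : Type*) (m : ℕ) : (Fin (2 * m) → X) ≃ (Fin m → X × X) :=
  (((finProdFinEquiv.trans (finCongr (mul_comm m 2))).symm.arrowCongr (Equiv.refl X)).trans
    (Equiv.curry _ _ _)).trans ((Equiv.refl _).arrowCongr (finTwoArrowEquiv X))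

theorem wordPairs_apply {X : Type*} {m : ℕ} (v : Fin (2 * m) → X) (i : Fin m) :
    wordPairs X m v i = (v ⟨2 * i, by lia⟩, v ⟨2 * i + 1, by lia⟩) := by
  refine Prod.ext (congrArg v (Fin.ext ?_)) (congrArg v (Fin.ext ?_))
  · exact zero_add _
  · exact add_comm _ _

theorem list_prod_ofFn_wordPairs {X R : Type*} [Monoid R] {m : ℕ} (f : X → R)
    (v : Fin (2 * m) → X) :
    (List.ofFn fun i => f (wordPairs X m v i).1 * f (wordPairs X m v i).2).prod =
      (List.ofFn (f ∘ v)).prod := by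
  rw [List.ofFn_mul', List.prod_flatten, List.map_ofFn]
  simp only [wordPairs_apply]
  congr 2 with i
  simp [List.ofFn_succ]

/-- The product of the entries of `B` over the consecutive pairs of letters of the word `v`: up to
sign, a single term of the Pfaffian. -/
def pairProd {κ A : Type*} [Monoid A] {m : ℕ} (B : Matrix κ κ A) (v : Fin (2 * m) → κ) : A :=
  (List.ofFn fun i : Fin m => B (v ⟨2 * i, by lia⟩) (v ⟨2 * i + 1, by lia⟩)).prod

theorem pairProd_smul {R A κ : Type*} [CommSemiring R] [Semiring A] [Algebra R A] {m : ℕ} (c : R)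
    (B : Matrix κ κ A) (v : Fin (2 * m) → κ) :
    pairProd (c • B) v = c ^ m • pairProd B v := by
  have := List.smul_prod
    (List.ofFn fun i : Fin m => B (v ⟨2 * i, by lia⟩) (v ⟨2 * i + 1, by lia⟩)) c
  rw [List.length_ofFn, List.map_ofFn] at this
  exact this.symm

section Pfaffian

variable {A : Type*} [Ring A] [Algebra ℂ A] {m : ℕ}

theorem factorial_smul_Pf (B : Matrix (Fin (2 * m)) (Fin (2 * m)) A) :
    ((2 : ℂ) ^ m * m.factorial) • Pf B =
      ∑ σ : Equiv.Perm (Fin (2 * m)), (Equiv.Perm.sign σ : ℤ) • pairProd B σ :=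
  smul_inv_smul₀ (by simp [Nat.factorial_ne_zero]) _

theorem Pf_smul (c : ℂ) (B : Matrix (Fin (2 * m)) (Fin (2 * m)) A) :
    Pf (c • B) = c ^ m • Pf B := by
  have normalization_ne_zero : (2 : ℂ) ^ m * m.factorial ≠ 0 := by simp [Nat.factorial_ne_zero]
  apply smul_right_injective A normalization_ne_zero
  simp only [smul_comm _ (c ^ m), factorial_smul_Pf, pairProd_smul, Finset.smul_sum]

end Pfaffian

/-- The 2-form `∑ᵢⱼ Bᵢⱼ xᵢ ∧ xⱼ` with coefficients in the algebra `A`, where `x` is a family of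
vectors. -/
def twoForm (R : Type*) {V A κ : Type*} [CommRing R] [AddCommGroup V] [Module R V] [Ring A]
    [Algebra R A] [Fintype κ] (x : κ → V) (B : Matrix κ κ A) : ExteriorAlgebra R V ⊗[R] A :=
  ∑ i, ∑ j, (ι R (x i) * ι R (x j)) ⊗ₜ B i j

variable {R V A κ : Type*} [AddCommGroup V] [Ring A] [Fintype κ]

theorem twoForm_pow [CommRing R] [Module R V] [Algebra R A] (x : κ → V) (B : Matrix κ κ A) (k : ℕ) :
    twoForm R x B ^ k =
      ∑ v : Fin (2 * k) → κ, ιMulti R (2 * k) (x ∘ v) ⊗ₜ pairProd B v := by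
  rw [twoForm, ← Fintype.sum_prod_type', sum_pow_eq_sum_list_prod,
    ← Equiv.sum_comp (wordPairs κ k)]
  refine Finset.sum_congr rfl fun v _ => ?_
  rw [← List.map_ofFn, tmul_list_prod, List.map_ofFn, List.map_ofFn, ExteriorAlgebra.ιMulti_apply,
    pairProd]
  congr 1
  · exact list_prod_ofFn_wordPairs (fun i => ι R (x i)) v
  · simp only [Function.comp_def, wordPairs_apply]

theorem twoForm_pow_eq_sum_Pf [LinearOrder κ] [Module ℂ V] [Algebra ℂ A] (x : κ → V)
    (B : Matrix κ κ A) (k : ℕ) :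
    twoForm ℂ x B ^ k = ((2 : ℂ) ^ k * k.factorial) • ∑ I : {I : Finset κ // I.card = 2 * k},
      ιMulti ℂ (2 * k) (x ∘ I.1.orderEmbOfFin I.2) ⊗ₜ[ℂ]
        Pf (B.submatrix (I.1.orderEmbOfFin I.2) (I.1.orderEmbOfFin I.2)) := by
  rw [twoForm_pow, sum_eq_sum_orderEmbOfFin_comp_perm, Finset.smul_sum]
  · refine Finset.sum_congr rfl fun I _ => ?_
    rw [← TensorProduct.tmul_smul, factorial_smul_Pf, TensorProduct.tmul_sum]
    refine Finset.sum_congr rfl fun σ _ => ?_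
    rw [← Function.comp_assoc, AlternatingMap.map_perm, Units.smul_def,
      TensorProduct.smul_tmul]
    rfl
  · intro v hv
    rw [(ιMulti ℂ (2 * k)).map_eq_zero_of_not_injective _ fun h => hv h.of_comp,
      TensorProduct.zero_tmul]

end PfaffianPowers

section ExteriorWords

open ExteriorAlgebra (ι ιMulti)

variable {R V X : Type*} [CommRing R] [AddCommGroup V] [Module R V]

theorem ι_mul_ι_eq_neg_swap (v w : V) : ι R v * ι R w = -(ι R w * ι R v) :=
  eq_neg_of_add_eq_zero_left (ExteriorAlgebra.ι_add_mul_swap v w)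

theorem commute_ι_mul_ι (v w : V) (x : ExteriorAlgebra R V) : Commute (ι R v * ι R w) x := by
  induction x using ExteriorAlgebra.induction with
  | algebraMap r => exact Algebra.commute_algebraMap_right r _
  | ι u =>
    rw [Commute, SemiconjBy, mul_assoc, ι_mul_ι_eq_neg_swap w u, mul_neg, ← mul_assoc,
      ι_mul_ι_eq_neg_swap v u, neg_mul, neg_neg, mul_assoc]
  | mul x y hx hy => exact hx.mul_right hy
  | add x y hx hy => exact hx.add_right hy

theorem ι_mul_ι_mul_self (v w : V) : ι R v * ι R w * (ι R v * ι R w) = 0 := by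
  rw [← mul_assoc, (commute_ι_mul_ι v w (ι R v)).eq, ← mul_assoc, ExteriorAlgebra.ι_sq_zero,
    zero_mul, zero_mul]

theorem prod_map_ι_mul_ι (e f : X → V) (l : List X) :
    (l.map fun i => ι R (e i) * ι R (f i)).prod =
      (l.map fun i => ι R (e i)).prod * (l.map fun i => ι R (f i)).reverse.prod := by
  induction l using List.reverseRecOn with
  | nil => simp
  | append_singleton l i ih =>
    simp only [List.map_append, List.map_singleton, List.prod_append, List.prod_singleton,
      List.reverse_append, List.reverse_singleton]
    rw [ih, mul_assoc, mul_assoc, ← (commute_ι_mul_ι _ _ _).eq]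
    simp only [mul_assoc]

theorem prod_map_ι_mul_ι_swap (v : V) (l : List V) :
    (l.map (ι R)).prod * ι R v = (-1 : R) ^ l.length • (ι R v * (l.map (ι R)).prod) := by
  induction l with
  | nil => simp
  | cons w l ih =>
    rw [List.map_cons, List.prod_cons, mul_assoc, ih, mul_smul_comm, ← mul_assoc,
      ι_mul_ι_eq_neg_swap w, List.length_cons, pow_succ, mul_neg_one, neg_smul, neg_mul, smul_neg,
      mul_assoc]

theorem prod_reverse_map_ι (l : List V) :
    (l.map (ι R)).reverse.prod = (-1 : R) ^ l.length.choose 2 • (l.map (ι R)).prod := by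
  induction l with
  | nil => simp
  | cons w l ih =>
    rw [List.map_cons, List.reverse_cons, List.prod_append, ih, List.prod_singleton,
      smul_mul_assoc, prod_map_ι_mul_ι_swap, smul_smul, ← pow_add, List.length_cons,
      Nat.choose_succ_succ', Nat.choose_one_right, add_comm, List.prod_cons]

theorem ιMulti_mul_ιMulti {r : ℕ} (x y : Fin r → V) :
    ιMulti R r x * ιMulti R r y =
      (-1 : R) ^ r.choose 2 • (List.ofFn fun a => ι R (x a) * ι R (y a)).prod := by
  have reverse_y := prod_reverse_map_ι (R := R) (List.ofFn y)
  rw [List.map_ofFn, List.length_ofFn, Function.comp_def] at reverse_y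
  rw [List.ofFn_eq_map (f := fun a => ι R (x a) * ι R (y a)), prod_map_ι_mul_ι, ← List.ofFn_eq_map,
    ← List.ofFn_eq_map, reverse_y, mul_smul_comm, smul_smul, ← pow_add, ← two_mul,
    (even_two_mul _).neg_one_pow, one_smul, ExteriorAlgebra.ιMulti_apply,
    ExteriorAlgebra.ιMulti_apply]

theorem prod_map_ι_eq_ιMulti (x : X → V) (l : List X) :
    (l.map fun i => ι R (x i)).prod = ιMulti R l.length (x ∘ l.get) := by
  rw [ExteriorAlgebra.ιMulti_apply]
  congr 1
  exact List.ext_getElem (by simp) fun i _ _ => by simp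

end ExteriorWords

section SquareZero

variable {R : Type*} [Ring R] {n : ℕ} {y : Fin n → R}

theorem prod_map_mul_eq_zero_of_mem (hcomm : ∀ i j, Commute (y i) (y j))
    (hsq : ∀ i, y i * y i = 0) {l : List (Fin n)} {i : Fin n} (hi : i ∈ l) :
    (l.map y).prod * y i = 0 := by
  have comm_prod : ∀ l' : List (Fin n), Commute (y i) (l'.map y).prod := fun l' =>
    Commute.list_prod_right _ _ fun x hx => by
      obtain ⟨j, -, rfl⟩ := List.mem_map.mp hx
      exact hcomm i j
  obtain ⟨l₁, l₂, rfl⟩ := List.append_of_mem hi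
  rw [List.map_append, List.prod_append, List.map_cons, List.prod_cons, mul_assoc, mul_assoc,
    ← (comm_prod l₂).eq, ← mul_assoc (y i), hsq, zero_mul, mul_zero]

theorem perm_finRange_of_nodup {l : List (Fin n)} (hl : l.Nodup) (hlen : l.length = n) :
    l.Perm (List.finRange n) := by
  refine (List.perm_ext_iff_of_nodup hl (List.nodup_finRange n)).mpr fun i => ?_
  have card_toFinset : l.toFinset.card = Fintype.card (Fin n) := by
    rw [List.toFinset_card_of_nodup hl, Fintype.card_fin, hlen]
  simp [← List.mem_toFinset, (Finset.card_eq_iff_eq_univ _).mp card_toFinset]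

theorem prod_map_mul_sum_pow (hcomm : ∀ i j, Commute (y i) (y j)) (hsq : ∀ i, y i * y i = 0)
    {m : ℕ} {l : List (Fin n)} (hl : l.Nodup) (hlen : l.length + m = n) :
    (l.map y).prod * (∑ i, y i) ^ m = m.factorial • ((List.finRange n).map y).prod := by
  induction m generalizing l with
  | zero =>
    rw [pow_zero, mul_one, Nat.factorial_zero, one_smul]
    refine ((perm_finRange_of_nodup hl hlen).map y).prod_eq' ?_
    exact List.pairwise_map.mpr (List.pairwise_of_forall fun i j => hcomm i j)
  | succ m ih =>
    have summand : ∀ i, (l.map y).prod * y i * (∑ j, y j) ^ m =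
        if i ∈ l.toFinset then 0 else m.factorial • ((List.finRange n).map y).prod := fun i => by
      split_ifs with hi
      · rw [prod_map_mul_eq_zero_of_mem hcomm hsq (List.mem_toFinset.mp hi), zero_mul]
      · rw [List.mem_toFinset] at hi
        rw [← ih (l := l ++ [i]) (List.concat_eq_append ▸ hl.concat hi) (by simp; lia)]
        simp
    have card_compl : l.toFinsetᶜ.card = m + 1 := by
      rw [Finset.card_compl, List.toFinset_card_of_nodup hl, Fintype.card_fin]
      lia
    rw [pow_succ', ← mul_assoc, Finset.mul_sum, Finset.sum_mul,
      Finset.sum_congr rfl fun i _ => summand i, Finset.sum_ite, Finset.sum_const_zero, zero_add,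
      Finset.sum_const, Finset.filter_not, Finset.filter_mem_eq_inter, Finset.univ_inter,
      ← Finset.compl_eq_univ_sdiff, card_compl, smul_smul, Nat.factorial_succ]

end SquareZero

section BerezinIntegral

open ExteriorAlgebra (ι ιMulti)
open Sum (inl inr)

variable {R : Type*} [CommRing R]

variable (R) in
/-- The Berezin integral on the exterior algebra of `R^N`: the linear form sending the volume form
`x₁ ∧ ⋯ ∧ x_N` of the standard basis to `1` and vanishing on forms of any other degree. -/
def berezin (N : ℕ) : ExteriorAlgebra R (Fin N → R) →ₗ[R] R :=
  ExteriorAlgebra.liftAlternating fun r =>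
    if h : r = N then Matrix.detRowAlternating.domDomCongr (finCongr h.symm) else 0

theorem berezin_ιMulti {N : ℕ} (v : Fin N → Fin N → R) :
    berezin R N (ιMulti R N v) = (Matrix.of v).det := by
  rw [berezin, ExteriorAlgebra.liftAlternating_apply_ιMulti, dif_pos rfl]
  rfl

theorem berezin_ιMulti_of_ne {N r : ℕ} (h : r ≠ N) (v : Fin r → Fin N → R) :
    berezin R N (ιMulti R r v) = 0 := by
  rw [berezin, ExteriorAlgebra.liftAlternating_apply_ιMulti, dif_neg h]
  rfl

theorem berezin_prod_finRange (N : ℕ) :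
    berezin R N ((List.finRange N).map fun s => ι R (Pi.single s 1)).prod = 1 := by
  rw [← List.ofFn_eq_map, ← ExteriorAlgebra.ιMulti_apply, berezin_ιMulti]
  convert Matrix.det_one (R := R) (n := Fin N)
  ext i j
  rw [Matrix.of_apply, Matrix.one_apply, Pi.single_apply]
  exact if_congr eq_comm rfl rfl

theorem berezin_prod_eq_zero_of_not_perm {N : ℕ} {l : List (Fin N)}
    (hl : ¬ l.Perm (List.finRange N)) :
    berezin R N (l.map fun s => ι R (Pi.single s 1)).prod = 0 := by
  rw [prod_map_ι_eq_ιMulti fun s => (Pi.single s 1 : Fin N → R)]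
  by_cases hlen : l.length = N
  · rw [AlternatingMap.map_eq_zero_of_not_injective _ _ fun h => hl ?_, map_zero]
    exact perm_finRange_of_nodup (List.nodup_iff_injective_get.mpr h.of_comp) hlen
  · exact berezin_ιMulti_of_ne hlen _

/-- The numbering `e₁, …, eₙ, fₙ, …, f₁` of the `2n` letters `eᵢ = inl i` and `fᵢ = inr i`, which
turns the anti-diagonal `Jmat` into the identity. -/
def hyperbolicEquiv (n : ℕ) : Fin n ⊕ Fin n ≃ Fin (2 * n) :=
  ((Equiv.refl _).sumCongr Fin.revPerm).trans (sumEquiv n)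

variable (R) in
/-- The standard basis of `R^(2n)` as a hyperbolic basis: `eᵢ` for `inl i`, `fᵢ` for `inr i`. -/
def hyperbolicBasis {n : ℕ} (s : Fin n ⊕ Fin n) : Fin (2 * n) → R :=
  Pi.single (hyperbolicEquiv n s) 1

variable (R) in
/-- The symplectic form `∑ᵢ eᵢ ∧ fᵢ`. -/
def symplecticForm (n : ℕ) : ExteriorAlgebra R (Fin (2 * n) → R) :=
  ∑ i : Fin n, ι R (hyperbolicBasis R (inl i)) * ι R (hyperbolicBasis R (inr i))

theorem finRange_two_mul_eq (n : ℕ) :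
    List.finRange (2 * n) = (List.finRange n).map (hyperbolicEquiv n ∘ inl) ++
      ((List.finRange n).map (hyperbolicEquiv n ∘ inr)).reverse := by
  refine List.ext_getElem (by simp; lia) fun i hi _ => ?_
  rw [List.getElem_append]
  split_ifs with h <;> simp only [List.length_finRange, List.length_map] at hi h
  · simp [hyperbolicEquiv, sumEquiv]
  · simp [hyperbolicEquiv, sumEquiv, Fin.ext_iff]
    lia

variable {n : ℕ}

theorem berezin_prod_hyperbolicBasis :
    berezin R (2 * n) ((List.finRange n).map fun i =>
      ι R (hyperbolicBasis R (inl i)) * ι R (hyperbolicBasis R (inr i))).prod = 1 := by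
  rw [prod_map_ι_mul_ι, ← List.prod_append, ← berezin_prod_finRange, finRange_two_mul_eq,
    List.map_append, List.map_reverse, List.map_map, List.map_map]
  rfl

theorem berezin_prod_mul_symplecticForm_pow_eq_zero {l : List (Fin n ⊕ Fin n)}
    (hl : ¬ (l.filterMap Sum.getLeft?).Perm (l.filterMap Sum.getRight?)) (m : ℕ) :
    berezin R (2 * n)
      ((l.map fun s => ι R (hyperbolicBasis R s)).prod * symplecticForm R n ^ m) = 0 := by
  induction m generalizing l with
  | zero =>
    rw [pow_zero, mul_one, ← berezin_prod_eq_zero_of_not_perm (l := l.map (hyperbolicEquiv n)),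
      List.map_map]
    · rfl
    · intro hperm
      rw [finRange_two_mul_eq, ← List.map_map, ← List.map_map, ← List.map_reverse,
        ← List.map_append, List.map_perm_map_iff (hyperbolicEquiv n).injective] at hperm
      refine hl ((hperm.filterMap _).trans (.trans ?_ (hperm.filterMap _).symm))
      simp [List.filterMap_map, Function.comp_def]
  | succ m ih =>
    rw [pow_succ', ← mul_assoc]
    nth_rw 1 [symplecticForm]
    rw [Finset.mul_sum, Finset.sum_mul, map_sum]
    refine Finset.sum_eq_zero fun j _ => ?_
    rw [← ih (l := l ++ [inl j, inr j])]
    · simp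
    · simpa [List.filterMap_cons, List.perm_append_right_iff] using hl

variable {p q k m : ℕ}

theorem berezin_ιMulti_mul_ιMulti_mul_pow_eq_zero {v : Fin p → Fin n} {w : Fin q → Fin n}
    (hvw : ¬ (List.ofFn v).Perm (List.ofFn w)) :
    berezin R (2 * n) (ιMulti R p (hyperbolicBasis R ∘ inl ∘ v) *
      ιMulti R q (hyperbolicBasis R ∘ inr ∘ w) * symplecticForm R n ^ m) = 0 := by
  rw [← berezin_prod_mul_symplecticForm_pow_eq_zero (R := R) (m := m)
    (l := (List.ofFn v).map inl ++ (List.ofFn w).map inr)]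
  · simp [ExteriorAlgebra.ιMulti_apply, List.map_ofFn, Function.comp_def]
  · simpa [List.filterMap_append, List.filterMap_map, Function.comp_def,
      -List.map_ofFn] using hvw

theorem neg_one_pow_choose_two {S : Type*} [Monoid S] [HasDistribNeg S] (k : ℕ) :
    (-1 : S) ^ (2 * k).choose 2 = (-1) ^ k := by
  rcases k.eq_zero_or_pos with rfl | hk
  · simp
  · rw [Nat.choose_two_right, mul_assoc, Nat.mul_div_cancel_left _ two_pos, mul_comm, pow_mul,
      Odd.neg_one_pow (show Odd (2 * k - 1) from ⟨k - 1, by lia⟩)]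

theorem berezin_ιMulti_mul_ιMulti_mul_pow (hkm : 2 * k + m = n) {v : Fin (2 * k) → Fin n}
    (hv : Function.Injective v) :
    berezin R (2 * n) (ιMulti R (2 * k) (hyperbolicBasis R ∘ inl ∘ v) *
      ιMulti R (2 * k) (hyperbolicBasis R ∘ inr ∘ v) * symplecticForm R n ^ m) =
      (-1) ^ k * m.factorial := by
  have paired_letters : ιMulti R (2 * k) (hyperbolicBasis R ∘ inl ∘ v) *
      ιMulti R (2 * k) (hyperbolicBasis R ∘ inr ∘ v) =
        (-1 : R) ^ k • ((List.ofFn v).map fun i =>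
          ι R (hyperbolicBasis R (inl i)) * ι R (hyperbolicBasis R (inr i))).prod := by
    rw [ιMulti_mul_ιMulti, neg_one_pow_choose_two, List.map_ofFn]
    rfl
  rw [paired_letters, smul_mul_assoc, symplecticForm,
    prod_map_mul_sum_pow (fun i j => commute_ι_mul_ι _ _ _) (fun i => ι_mul_ι_mul_self _ _)
      (List.nodup_ofFn.mpr hv) (by simpa using hkm),
    map_smul, map_nsmul, berezin_prod_hyperbolicBasis, smul_eq_mul, nsmul_one]

end BerezinIntegral

section TwoForms

open ExteriorAlgebra (ι)
open Sum (inl inr)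
open scoped TensorProduct

variable {R V A κ κ' : Type*} [CommRing R] [AddCommGroup V] [Module R V] [Ring A] [Algebra R A]
  [Fintype κ] [Fintype κ']

theorem twoForm_comp_equiv (e : κ' ≃ κ) (x : κ → V) (B : Matrix κ κ A) :
    twoForm R (x ∘ e) (B.submatrix e e) = twoForm R x B := by
  rw [twoForm, twoForm, ← e.sum_comp]
  exact Finset.sum_congr rfl fun i _ => e.sum_comp fun j => (ι R _ * ι R (x j)) ⊗ₜ B (e i) j

theorem commute_sum_tmul_one_twoForm (x y z : κ → V) (B : Matrix κ κ A) :
    Commute ((∑ i, ι R (x i) * ι R (y i)) ⊗ₜ[R] (1 : A)) (twoForm R z B) :=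
  Commute.sum_right _ _ _ fun i _ => Commute.sum_right _ _ _ fun j _ => by
    have left_comm : Commute (∑ k, ι R (x k) * ι R (y k)) (ι R (z i) * ι R (z j)) :=
      Commute.sum_left _ _ _ fun k _ => commute_ι_mul_ι _ _ _
    rw [Commute, SemiconjBy, Algebra.TensorProduct.tmul_mul_tmul,
      Algebra.TensorProduct.tmul_mul_tmul, left_comm.eq, one_mul, mul_one]

variable [DecidableEq κ]

theorem sum_sum_tmul_smul_one (x y : κ → V) (u : R) :
    ∑ i, ∑ j, (ι R (x i) * ι R (y j)) ⊗ₜ[R] (u • (1 : Matrix κ κ A)) i j =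
      u • ((∑ i, ι R (x i) * ι R (y i)) ⊗ₜ[R] (1 : A)) := by
  simp [Matrix.one_apply, TensorProduct.tmul_ite, TensorProduct.sum_tmul, Finset.smul_sum]

theorem twoForm_fromBlocks_smul_one (x : κ ⊕ κ → V) (M D : Matrix κ κ A) (u : R) :
    twoForm R x (Matrix.fromBlocks M (u • 1) (-(u • 1)) D) =
      twoForm R (x ∘ inl) M + twoForm R (x ∘ inr) D +
        (2 * u) • ((∑ i, ι R (x (inl i)) * ι R (x (inr i))) ⊗ₜ[R] (1 : A)) := by
  have swapped : ∑ i, ι R (x (inr i)) * ι R (x (inl i)) =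
      -∑ i, ι R (x (inl i)) * ι R (x (inr i)) := by
    rw [← Finset.sum_neg_distrib]
    exact Finset.sum_congr rfl fun i _ => ι_mul_ι_eq_neg_swap _ _
  have upper := sum_sum_tmul_smul_one (A := A) (x ∘ inl) (x ∘ inr) u
  have lower := sum_sum_tmul_smul_one (A := A) (x ∘ inr) (x ∘ inl) (-u)
  simp only [Function.comp_apply, neg_smul, swapped, TensorProduct.neg_tmul, smul_neg, neg_neg]
    at upper lower
  simp only [twoForm, Fintype.sum_sum_type, Finset.sum_add_distrib, Matrix.fromBlocks_apply₁₁,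
    Matrix.fromBlocks_apply₁₂, Matrix.fromBlocks_apply₂₁, Matrix.fromBlocks_apply₂₂, upper, lower,
    Function.comp_apply]
  module

theorem sum_sum_tmul_one_mul_one (F : κ → κ → ExteriorAlgebra R V) (i j : κ) :
    ∑ k, ∑ l, F k l ⊗ₜ[R] ((1 : Matrix κ κ A) i k * (1 : Matrix κ κ A) j l) = F i j ⊗ₜ 1 := by
  simp [Matrix.one_apply, TensorProduct.tmul_ite]

theorem ι_mul_ι_mul_ι_mul_ι_swap_left (v w v' w' : V) :
    ι R v * ι R w * (ι R v' * ι R w') = -(ι R v' * ι R w * (ι R v * ι R w')) := by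
  rw [mul_assoc, ← mul_assoc (ι R w), ← mul_assoc, ← (commute_ι_mul_ι _ _ _).eq,
    ι_mul_ι_eq_neg_swap w, neg_mul, neg_mul, mul_assoc]

theorem ι_mul_ι_mul_ι_mul_ι_swap_middle (v w v' w' : V) :
    ι R v * ι R w * (ι R v' * ι R w') = -(ι R v * ι R v' * (ι R w * ι R w')) := by
  rw [mul_assoc, ← mul_assoc (ι R w), ι_mul_ι_eq_neg_swap w v', neg_mul, mul_neg]
  simp only [mul_assoc]

/-- The relations `[Dᵢⱼ, Mₖₗ] = δᵢₖ δⱼₗ − δᵢₗ δⱼₖ` satisfied by the entries `M` of a generic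
alternating matrix and the derivations `D` in them. -/
def CanonicalCommutation (M D : Matrix κ κ A) : Prop :=
  ∀ i j k l, ⁅D i j, M k l⁆ =
    (1 : Matrix κ κ A) i k * (1 : Matrix κ κ A) j l -
      (1 : Matrix κ κ A) i l * (1 : Matrix κ κ A) j k

theorem sum_tmul_commutator {M D : Matrix κ κ A} (hDM : CanonicalCommutation M D) (x y : κ → V) :
    ∑ i, ∑ j, ∑ k, ∑ l, (ι R (x k) * ι R (y i) * (ι R (x l) * ι R (y j))) ⊗ₜ[R] ⁅D i j, M k l⁆ =
      (2 : R) • ((∑ i, ι R (x i) * ι R (y i)) ⊗ₜ[R] (1 : A)) ^ 2 := by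
  have inner_sum : ∀ i j, ∑ k, ∑ l,
      (ι R (x k) * ι R (y i) * (ι R (x l) * ι R (y j))) ⊗ₜ[R] ⁅D i j, M k l⁆ =
        (2 : R) • ((ι R (x i) * ι R (y i) * (ι R (x j) * ι R (y j))) ⊗ₜ[R] 1) := by
    intro i j
    have identity_term := sum_sum_tmul_one_mul_one (A := A)
      (fun k l => ι R (x k) * ι R (y i) * (ι R (x l) * ι R (y j))) i j
    have swapped_term := sum_sum_tmul_one_mul_one (A := A)
      (fun l k => ι R (x k) * ι R (y i) * (ι R (x l) * ι R (y j))) i j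
    rw [Finset.sum_comm, ι_mul_ι_mul_ι_mul_ι_swap_left (x j), TensorProduct.neg_tmul]
      at swapped_term
    simp only [hDM i j, TensorProduct.tmul_sub, Finset.sum_sub_distrib]
    rw [identity_term, swapped_term, sub_neg_eq_add, two_smul]
  simp only [inner_sum, ← Finset.smul_sum, ← TensorProduct.sum_tmul, ← Finset.sum_mul_sum, sq,
    Algebra.TensorProduct.tmul_mul_tmul, one_mul]

theorem twoForm_neg_mul_twoForm {M D : Matrix κ κ A} (hDM : CanonicalCommutation M D)
    (x y : κ → V) :
    twoForm R y (-D) * twoForm R x M = twoForm R x M * twoForm R y (-D) +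
      (2 : R) • ((∑ i, ι R (x i) * ι R (y i)) ⊗ₜ[R] (1 : A)) ^ 2 := by
  have summand : ∀ i j k l, (ι R (y i) * ι R (y j)) ⊗ₜ[R] (-D i j) *
      (ι R (x k) * ι R (x l)) ⊗ₜ[R] M k l =
      (ι R (x k) * ι R (x l)) ⊗ₜ[R] M k l * (ι R (y i) * ι R (y j)) ⊗ₜ[R] (-D i j) +
      (ι R (x k) * ι R (y i) * (ι R (x l) * ι R (y j))) ⊗ₜ[R] ⁅D i j, M k l⁆ := by
    intro i j k l
    simp only [Algebra.TensorProduct.tmul_mul_tmul, (commute_ι_mul_ι (y i) (y j) _).eq,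
      Ring.lie_def]
    rw [ι_mul_ι_mul_ι_mul_ι_swap_middle]
    simp only [TensorProduct.neg_tmul, TensorProduct.tmul_neg, TensorProduct.tmul_sub, mul_neg,
      neg_mul]
    abel
  rw [← sum_tmul_commutator hDM]
  simp only [twoForm, Matrix.neg_apply]
  conv_lhs => simp only [Finset.sum_mul]
  simp only [Finset.mul_sum, summand, Finset.sum_add_distrib]
  simp only [← Finset.sum_mul, ← Finset.mul_sum]

end TwoForms

section Capelli

open ExteriorAlgebra (ιMulti)
open Sum (inl inr)
open scoped TensorProduct

variable {R A : Type*} [CommRing R] [Ring A] [Algebra R A] {n : ℕ}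

/-- The block matrix `[[M, u·J_n], [−u·J_n, −J_n D J_n]]` of `PhiTilde`, for matrices `M` and `D`
over an arbitrary algebra. -/
def phiMatrix (M D : Matrix (Fin n) (Fin n) A) (u : R) : Matrix (Fin (2 * n)) (Fin (2 * n)) A :=
  Matrix.reindex (sumEquiv n) (sumEquiv n)
    (Matrix.fromBlocks M (u • Jmat A n) (-(u • Jmat A n)) (-(Jmat A n * D * Jmat A n)))

theorem Jmat_eq_submatrix_one {S : Type*} [Zero S] [One S] :
    Jmat S n = (1 : Matrix (Fin n) (Fin n) S).submatrix Fin.revPerm (Equiv.refl _) := by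
  ext i j
  rw [Jmat, Matrix.of_apply, Matrix.submatrix_apply, Matrix.one_apply]
  refine if_congr ?_ rfl rfl
  rw [Equiv.refl_apply, Fin.revPerm_apply, Fin.ext_iff, Fin.val_rev]
  lia

theorem Jmat_mul_mul_Jmat {S : Type*} [NonAssocSemiring S] (D : Matrix (Fin n) (Fin n) S) :
    Jmat S n * D * Jmat S n = D.submatrix Fin.rev Fin.rev := by
  rw [Jmat_eq_submatrix_one, Matrix.one_submatrix_mul, Matrix.mul_submatrix_one]
  rfl

theorem phiMatrix_submatrix_hyperbolicEquiv (M D : Matrix (Fin n) (Fin n) A) (u : R) :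
    (phiMatrix M D u).submatrix (hyperbolicEquiv n) (hyperbolicEquiv n) =
      Matrix.fromBlocks M (u • 1) (-(u • 1)) (-D) := by
  rw [phiMatrix, Jmat_mul_mul_Jmat, Jmat_eq_submatrix_one]
  ext (i | i) (j | j) <;> simp [hyperbolicEquiv, Matrix.one_apply, Fin.rev_eq_iff]

/-- The Berezin integral with coefficients in `A`, for exterior forms over `R^N`. -/
def berezinCoeff (R A : Type*) [CommRing R] [Ring A] [Algebra R A] (N : ℕ) :
    ExteriorAlgebra R (Fin N → R) ⊗[R] A →ₗ[R] A :=
  (TensorProduct.lid R A).toLinearMap ∘ₗ (berezin R N).rTensor A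

theorem berezinCoeff_tmul {N : ℕ} (z : ExteriorAlgebra R (Fin N → R)) (a : A) :
    berezinCoeff R A N (z ⊗ₜ a) = berezin R N z • a :=
  rfl

variable [Algebra ℂ A]

theorem berezinCoeff_twoForm_pow (B : Matrix (Fin (2 * n)) (Fin (2 * n)) A) :
    berezinCoeff ℂ A (2 * n) (twoForm ℂ (fun s => Pi.single s 1) B ^ n) =
      ((2 : ℂ) ^ n * n.factorial) • Pf B := by
  have emb_univ : ∀ h, ⇑(Finset.univ.orderEmbOfFin h) = (id : Fin (2 * n) → Fin (2 * n)) :=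
    fun h => (Finset.orderEmbOfFin_unique h (fun _ => Finset.mem_univ _) strictMono_id).symm
  rw [twoForm_pow_eq_sum_Pf, map_smul, map_sum, Fintype.sum_eq_single ⟨Finset.univ, by simp⟩]
  · simp only [emb_univ, Function.comp_id, Matrix.submatrix_id_id, berezinCoeff_tmul]
    have := berezin_prod_finRange (R := ℂ) (2 * n)
    rw [ExteriorAlgebra.ιMulti_apply, List.ofFn_eq_map, this, one_smul]
  · rintro ⟨I, hI⟩ hI_ne
    exact absurd (Subtype.ext ((Finset.card_eq_iff_eq_univ I).mp (by simpa using hI))) hI_ne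

variable {p q k m : ℕ}

theorem berezinCoeff_twoForm_pow_mul_twoForm_pow (M N : Matrix (Fin n) (Fin n) A) :
    berezinCoeff ℂ A (2 * n) (twoForm ℂ (hyperbolicBasis ℂ ∘ inl) M ^ p *
        twoForm ℂ (hyperbolicBasis ℂ ∘ inr) N ^ q * (symplecticForm ℂ n ⊗ₜ 1) ^ m) =
      (((2 : ℂ) ^ p * p.factorial) * ((2 : ℂ) ^ q * q.factorial)) •
        ∑ I : {I : Finset (Fin n) // I.card = 2 * p}, ∑ J : {J : Finset (Fin n) // J.card = 2 * q},
          berezin ℂ (2 * n)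
            (ιMulti ℂ (2 * p) (hyperbolicBasis ℂ ∘ inl ∘ I.1.orderEmbOfFin I.2) *
              ιMulti ℂ (2 * q) (hyperbolicBasis ℂ ∘ inr ∘ J.1.orderEmbOfFin J.2) *
                symplecticForm ℂ n ^ m) •
            (Pf (M.submatrix (I.1.orderEmbOfFin I.2) (I.1.orderEmbOfFin I.2)) *
              Pf (N.submatrix (J.1.orderEmbOfFin J.2) (J.1.orderEmbOfFin J.2))) := by
  rw [twoForm_pow_eq_sum_Pf, twoForm_pow_eq_sum_Pf, smul_mul_smul_comm, smul_mul_assoc, map_smul,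
    Finset.sum_mul_sum, Finset.sum_mul, map_sum]
  simp only [Finset.sum_mul, map_sum, Algebra.TensorProduct.tmul_mul_tmul,
    Algebra.TensorProduct.tmul_pow, one_pow, mul_one, berezinCoeff_tmul, Function.comp_assoc]

theorem berezinCoeff_twoForm_pow_mul_twoForm_pow_of_ne (hpq : p ≠ q)
    (M N : Matrix (Fin n) (Fin n) A) :
    berezinCoeff ℂ A (2 * n) (twoForm ℂ (hyperbolicBasis ℂ ∘ inl) M ^ p *
        twoForm ℂ (hyperbolicBasis ℂ ∘ inr) N ^ q * (symplecticForm ℂ n ⊗ₜ 1) ^ m) = 0 := by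
  rw [berezinCoeff_twoForm_pow_mul_twoForm_pow, Finset.sum_eq_zero, smul_zero]
  refine fun I _ => Finset.sum_eq_zero fun J _ => ?_
  rw [berezin_ιMulti_mul_ιMulti_mul_pow_eq_zero, zero_smul]
  intro hperm
  simpa [hpq] using hperm.length_eq

theorem orderEmbOfFin_perm_iff {κ : Type*} [LinearOrder κ] {r : ℕ} {I J : Finset κ}
    {hI : I.card = r} {hJ : J.card = r} :
    (List.ofFn (I.orderEmbOfFin hI)).Perm (List.ofFn (J.orderEmbOfFin hJ)) ↔ I = J := by
  refine ⟨fun hperm => Finset.ext fun i => ?_, fun h => by subst h; rfl⟩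
  rw [← Finset.mem_coe, ← Finset.mem_coe, ← Finset.range_orderEmbOfFin I hI,
    ← Finset.range_orderEmbOfFin J hJ, Set.mem_range, Set.mem_range,
    ← List.mem_ofFn, ← List.mem_ofFn, hperm.mem_iff]

/-- The element `∑_{|I| = 2k} Pf(M_I) Pf(D_I)`, which is `Gamma` for arbitrary matrices. -/
def capelliPfaffian (M D : Matrix (Fin n) (Fin n) A) (k : ℕ) : A :=
  ∑ I : {I : Finset (Fin n) // I.card = 2 * k},
    Pf (M.submatrix (I.1.orderEmbOfFin I.2) (I.1.orderEmbOfFin I.2)) *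
      Pf (D.submatrix (I.1.orderEmbOfFin I.2) (I.1.orderEmbOfFin I.2))

theorem berezinCoeff_twoForm_pow_mul_twoForm_neg_pow (hkm : 2 * k + m = n)
    (M D : Matrix (Fin n) (Fin n) A) :
    berezinCoeff ℂ A (2 * n) (twoForm ℂ (hyperbolicBasis ℂ ∘ inl) M ^ k *
        twoForm ℂ (hyperbolicBasis ℂ ∘ inr) (-D) ^ k * (symplecticForm ℂ n ⊗ₜ 1) ^ m) =
      (((2 : ℂ) ^ k * k.factorial) ^ 2 * m.factorial) • capelliPfaffian M D k := by
  rw [berezinCoeff_twoForm_pow_mul_twoForm_pow, capelliPfaffian, ← sq, mul_smul]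
  congr 1
  rw [Finset.smul_sum]
  refine Finset.sum_congr rfl fun I _ => ?_
  rw [Fintype.sum_eq_single I]
  · rw [berezin_ιMulti_mul_ιMulti_mul_pow hkm (I.1.orderEmbOfFin I.2).injective,
      ← neg_one_smul ℂ D, Matrix.submatrix_smul, Pi.smul_apply, Pi.smul_apply, Pf_smul,
      mul_smul_comm, smul_smul, mul_right_comm, ← mul_pow, neg_one_mul, neg_neg, one_pow, one_mul]
  · intro J hJ
    rw [berezin_ιMulti_mul_ιMulti_mul_pow_eq_zero, zero_smul]
    exact fun hperm => hJ (Subtype.ext (orderEmbOfFin_perm_iff.mp hperm).symm)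

theorem berezinCoeff_normalOrderedDivPow_odd (M N : Matrix (Fin n) (Fin n) A) (k : ℕ) :
    berezinCoeff ℂ A (2 * n) (normalOrderedDivPow ℂ (twoForm ℂ (hyperbolicBasis ℂ ∘ inl) M)
      (twoForm ℂ (hyperbolicBasis ℂ ∘ inr) N) (2 * k + 1) * (symplecticForm ℂ n ⊗ₜ 1) ^ m) = 0 := by
  rw [normalOrderedDivPow, Finset.sum_mul, map_sum]
  refine Finset.sum_eq_zero fun p hp => ?_
  have hp_ne : p.1 ≠ p.2 := fun h => by have := mem_antidiagonal.mp hp; lia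
  simp only [divPow, smul_mul_assoc, mul_smul_comm, map_smul,
    berezinCoeff_twoForm_pow_mul_twoForm_pow_of_ne hp_ne, smul_zero]

theorem berezinCoeff_normalOrderedDivPow_even (hkm : 2 * k + m = n)
    (M D : Matrix (Fin n) (Fin n) A) :
    berezinCoeff ℂ A (2 * n) (normalOrderedDivPow ℂ (twoForm ℂ (hyperbolicBasis ℂ ∘ inl) M)
        (twoForm ℂ (hyperbolicBasis ℂ ∘ inr) (-D)) (2 * k) * (symplecticForm ℂ n ⊗ₜ 1) ^ m) =
      ((2 : ℂ) ^ (2 * k) * m.factorial) • capelliPfaffian M D k := by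
  have hk : (k.factorial : ℂ) ≠ 0 := by simp [Nat.factorial_ne_zero]
  rw [normalOrderedDivPow, Finset.sum_mul, map_sum, Finset.sum_eq_single (k, k)]
  · simp only [divPow, smul_mul_assoc, mul_smul_comm, map_smul,
      berezinCoeff_twoForm_pow_mul_twoForm_neg_pow hkm, smul_smul]
    congr 1
    field_simp
    ring
  · intro p hp hp_ne
    have hp_ne' : p.1 ≠ p.2 := fun h => hp_ne <| by
      have := mem_antidiagonal.mp hp
      exact Prod.ext (by lia) (by lia)
    simp only [divPow, smul_mul_assoc, mul_smul_comm, map_smul,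
      berezinCoeff_twoForm_pow_mul_twoForm_pow_of_ne hp_ne', smul_zero]
  · exact fun h => absurd (mem_antidiagonal.mpr (two_mul k).symm) h

theorem sum_antidiagonal_eq_sum_range_of_odd {N : Type*} [AddCommMonoid N] {F : ℕ × ℕ → N}
    (hF : ∀ r k, F (r, 2 * k + 1) = 0) (n : ℕ) :
    ∑ p ∈ antidiagonal n, F p = ∑ k ∈ Finset.range (n / 2 + 1), F (n - 2 * k, 2 * k) := by
  symm
  refine Finset.sum_of_injOn (fun k => (n - 2 * k, 2 * k)) (fun k _ l _ h => ?_) (fun k hk => ?_)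
    (fun p hp hp_not => ?_) fun _ _ => rfl
  · have := congrArg Prod.snd h
    lia
  · have := Finset.mem_range.mp hk
    exact mem_antidiagonal.mpr (by lia)
  · obtain ⟨r, j⟩ := p
    have hj := mem_antidiagonal.mp hp
    obtain ⟨k, rfl | rfl⟩ := j.even_or_odd'
    · exact absurd ⟨k, by simp; lia, by simp; lia⟩ hp_not
    · exact hF r k

theorem berezinCoeff_divPow_twoForm (B : Matrix (Fin (2 * n)) (Fin (2 * n)) A) :
    berezinCoeff ℂ A (2 * n) (divPow ℂ (twoForm ℂ (fun s => Pi.single s 1) B) n) =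
      (2 : ℂ) ^ n • Pf B := by
  have factorial_ne_zero : (n.factorial : ℂ) ≠ 0 := Nat.cast_ne_zero.mpr n.factorial_ne_zero
  rw [divPow, map_smul, berezinCoeff_twoForm_pow, smul_smul, mul_comm, mul_assoc,
    mul_inv_cancel₀ factorial_ne_zero, mul_one]

theorem divPow_twoForm_phiMatrix {M D : Matrix (Fin n) (Fin n) A}
    (hDM : CanonicalCommutation M D) (u : ℂ) (m : ℕ) :
    divPow ℂ (twoForm ℂ (fun s => Pi.single s 1) (phiMatrix M D u)) m =
      ∑ p ∈ antidiagonal m, imaginaryHermiteCoeff u p.1 •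
        (normalOrderedDivPow ℂ (twoForm ℂ (hyperbolicBasis ℂ ∘ inl) M)
          (twoForm ℂ (hyperbolicBasis ℂ ∘ inr) (-D)) p.2 * (symplecticForm ℂ n ⊗ₜ 1) ^ p.1) := by
  have decomposition : twoForm ℂ (fun s => Pi.single s 1) (phiMatrix M D u) =
      twoForm ℂ (hyperbolicBasis ℂ ∘ inl) M + twoForm ℂ (hyperbolicBasis ℂ ∘ inr) (-D) +
        (2 * u) • (symplecticForm ℂ n ⊗ₜ[ℂ] (1 : A)) := by
    rw [← twoForm_comp_equiv (hyperbolicEquiv n), phiMatrix_submatrix_hyperbolicEquiv,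
      twoForm_fromBlocks_smul_one]
    rfl
  rw [decomposition]
  exact divPow_add_add_smul (twoForm_neg_mul_twoForm hDM _ _)
    (commute_sum_tmul_one_twoForm _ _ _ _) (commute_sum_tmul_one_twoForm _ _ _ _)
    (imaginaryHermiteCoeff_zero u) (imaginaryHermiteCoeff_one u)
    (imaginaryHermiteCoeff_add_two u) m

theorem Pf_PhiTilde_Hermite_general {M D : Matrix (Fin n) (Fin n) A}
    (hDM : CanonicalCommutation M D) (u : ℂ) :
    Pf (phiMatrix M D u) = ∑ k ∈ Finset.range (n / 2 + 1),
      ((-Complex.I / 2) ^ (n - 2 * k) * Hermite (n - 2 * k) (Complex.I * u)) •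
        capelliPfaffian M D k := by
  apply smul_right_injective A (pow_ne_zero n two_ne_zero : (2 : ℂ) ^ n ≠ 0)
  beta_reduce
  rw [← berezinCoeff_divPow_twoForm, divPow_twoForm_phiMatrix hDM, map_sum,
    sum_antidiagonal_eq_sum_range_of_odd, Finset.smul_sum]
  · refine Finset.sum_congr rfl fun k hk => ?_
    obtain ⟨r, hr⟩ := Nat.exists_eq_add_of_le (Nat.mul_le_of_le_div 2 k n (by grind) : k * 2 ≤ n)
    have hkr : 2 * k + r = n := by lia
    have factorial_ne_zero : (r.factorial : ℂ) ≠ 0 := Nat.cast_ne_zero.mpr r.factorial_ne_zero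
    rw [show n - 2 * k = r by lia, map_smul, berezinCoeff_normalOrderedDivPow_even hkr, smul_smul,
      smul_smul, imaginaryHermiteCoeff]
    congr 1
    rw [div_pow, ← hkr, pow_add]
    field_simp
  · intro r k
    rw [map_smul, berezinCoeff_normalOrderedDivPow_odd, smul_zero]

end Capelli

section PolynomialOperators

variable (n : ℕ)

theorem Mop_eq_mulLeft (i j : Fin n) : Mop n i j = LinearMap.mulLeft ℂ (genMat n i j) := by
  rw [Mop, genMat, Matrix.of_apply]
  split_ifs
  · rfl
  · ext; simp
  · ext; simp

theorem Dop_mul (i j : Fin n) (p q : P n) :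
    Dop n i j (p * q) = p * Dop n i j q + Dop n i j p * q := by
  rw [Dop]
  split_ifs <;> simp <;> ring

theorem lie_Dop_mulLeft (i j : Fin n) (p : P n) :
    ⁅Dop n i j, LinearMap.mulLeft ℂ p⁆ = LinearMap.mulLeft ℂ (Dop n i j p) := by
  refine LinearMap.ext fun q => ?_
  simp [Ring.lie_def, Dop_mul]

theorem Dop_genMat (i j k l : Fin n) :
    Dop n i j (genMat n k l) =
      (1 : Matrix (Fin n) (Fin n) (P n)) i k * (1 : Matrix (Fin n) (Fin n) (P n)) j l -
        (1 : Matrix (Fin n) (Fin n) (P n)) i l * (1 : Matrix (Fin n) (Fin n) (P n)) j k := by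
  rcases lt_trichotomy i j with hij | rfl | hij <;>
    rcases lt_trichotomy k l with hkl | rfl | hkl <;>
    simp [Dop, genMat, Matrix.one_apply, pderiv_X, Pi.single_apply, *, not_lt_of_gt] <;> grind

theorem canonicalCommutation_Mop_Dop :
    CanonicalCommutation (Matrix.of (Mop n)) (Matrix.of (Dop n)) := by
  intro i j k l
  simp only [Matrix.of_apply, Mop_eq_mulLeft, lie_Dop_mulLeft, Dop_genMat]
  refine LinearMap.ext fun q => ?_
  simp only [Matrix.one_apply]
  split_ifs <;> simp

end PolynomialOperators

/-- `Pf(Φ̃(u)) = Σ_{k=0}^{⌊n/2⌋} (−i/2)^{n−2k} H_{n−2k}(iu) Γ_k`. -/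
theorem Pf_PhiTilde_Hermite (n : ℕ) (hn : 1 ≤ n) (u : ℂ) :
    Pf (PhiTilde n u) =
      ∑ k ∈ Finset.range (n / 2 + 1),
        ((-Complex.I / 2) ^ (n - 2 * k) * Hermite (n - 2 * k) (Complex.I * u)) •
          Gamma n k :=
  Pf_PhiTilde_Hermite_general (canonicalCommutation_Mop_Dop n) u

end
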